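/- Let B be a quadratic pair algebra and let a,b,c ∈ h₀B be homogeneous of degrees p,q,r with a·b = 0 and b·c = 0. For any representatives ā ∈ B_{p,0}, b̄ ∈ B_{q,0}, c̄ ∈ B_{r,0} of a,b,c there exist e ∈ B_{p+q,1} and f ∈ B_{q+r,1} with ∂(e) = ā·b̄ and ∂(f) = b̄·c̄; for every such choice the element −e·c̄ + ā·f lies in h₁B_{p+q+r} = Ker(∂) in degree p+q+r; and the set ⟨a,b,c⟩ of all elements arising in this way from all choices of ā, b̄, c̄, e, f (the Massey product) is a coset of the subgroup (h₁B_{p+q})·c + a·(h₁B_{q+r}) of h₁B_{p+q+r}. -/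

import Mathlib

/-!
Write `M(ā, b̄, c̄)` for the set of elements `-e·c̄ + ā·f` with `∂e = ā·b̄`, `∂f = b̄·c̄`
(`masseyRep` below). The proof has two parts.

* `M(ā, b̄, c̄)` does not change when a representative is changed by a boundary. Replacing `ā`
  by `ā + ∂u`, `b̄` by `b̄ + ∂v` or `c̄` by `c̄ + ∂w`, the elements `e` and `f` can be corrected
  (by `u·b̄ + P((∂u|ā)·H b̄)`; by `ā·v` and `v·c̄ + P((∂v|b̄)·H c̄)`; by `b̄·w`, respectively) so
  that `e·c̄` and `ā·f` both acquire the same right summand `Y`. As `-e·c̄ + ā·f` lies in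
  `Ker ∂`, which is central, it is unaffected by the resulting conjugation by `Y`. Hence the
  Massey product set is `M(a0, b0, c0)`.
* For fixed representatives, `e` and `f` are unique up to `Ker ∂`, on which all products are
  biadditive because the quadratic corrections vanish. So `M(a0, b0, c0)` is a coset of the
  indeterminacy.
-/


/-- The cross effect `(a|b)_H = H(a+b) - H(b) - H(a)` of a function `H` between groups. -/
def crossEff {Xe Xee : Type*} [AddGroup Xe] [AddCommGroup Xee]
    (H : Xe → Xee) (a b : Xe) : Xee :=
  H (a + b) - H b - H a

/-- A square group structure on a (not necessarily abelian) group `Xe` and an abelian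
group `Xee`, given by a homomorphism `P : Xee → Xe` and a quadratic map `H : Xe → Xee`. -/
structure IsSquareGroup {Xe Xee : Type*} [AddGroup Xe] [AddCommGroup Xee]
    (P : Xee →+ Xe) (H : Xe → Xee) : Prop where
  cross_add_left : ∀ a b c : Xe,
    crossEff H (a + b) c = crossEff H a c + crossEff H b c
  cross_add_right : ∀ a b c : Xe,
    crossEff H a (b + c) = crossEff H a b + crossEff H a c
  cross_P_left : ∀ (x : Xee) (b : Xe), crossEff H (P x) b = 0
  cross_P_right : ∀ (a : Xe) (y : Xee), crossEff H a (P y) = 0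
  P_cross : ∀ a b : Xe, P (crossEff H a b) = -a - b + a + b
  P_H_P : ∀ x : Xee, P (H (P x)) = P x + P x


/-- A quadratic pair algebra: an ℕ-graded quadratic pair module `{B_{n,*}}` together with
multiplications on levels 0, 1 and ee (indexed by a proof `p + q = r` recording degrees),
a unit `1 ∈ B_{0,0}` with `H(1) = 0` (whose cross-square `(1|1)_H` is a unit for the
ee-multiplication), satisfying associativity, right linearity, left distributivity with
quadratic correction terms, and the compatibility laws with `∂`, `P` and `H`. -/
structure QuadraticPairAlgebra (B0 B1 Bee : ℕ → Type*)
    [∀ n, AddGroup (B0 n)] [∀ n, AddGroup (B1 n)] [∀ n, AddCommGroup (Bee n)] where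
  d : ∀ n, B1 n →+ B0 n
  P : ∀ n, Bee n →+ B1 n
  H : ∀ n, B0 n → Bee n
  sq0 : ∀ n, IsSquareGroup ((d n).comp (P n)) (H n)
  sq1 : ∀ n, IsSquareGroup (P n) (H n ∘ d n)
  mul : ∀ {p q r : ℕ}, p + q = r → B0 p → B0 q → B0 r
  smul : ∀ {p q r : ℕ}, p + q = r → B0 p → B1 q → B1 r
  smulr : ∀ {p q r : ℕ}, p + q = r → B1 p → B0 q → B1 r
  mulee : ∀ {p q r : ℕ}, p + q = r → Bee p → Bee q → Bee r
  one : B0 0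
  H_one : H 0 one = 0
  one_mul : ∀ {q : ℕ} (x : B0 q), mul (Nat.zero_add q) one x = x
  mul_one : ∀ {p : ℕ} (x : B0 p), mul rfl x one = x
  one_smul : ∀ {q : ℕ} (s : B1 q), smul (Nat.zero_add q) one s = s
  smulr_one : ∀ {p : ℕ} (s : B1 p), smulr rfl s one = s
  crossone_mulee : ∀ {q : ℕ} (a : Bee q),
    mulee (Nat.zero_add q) (crossEff (H 0) one one) a = a
  mulee_crossone : ∀ {p : ℕ} (a : Bee p),
    mulee rfl a (crossEff (H 0) one one) = a
  mul_assoc : ∀ {p q r : ℕ} (x : B0 p) (y : B0 q) (z : B0 r),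
    mul rfl (mul rfl x y) z = mul (Nat.add_assoc p q r).symm x (mul rfl y z)
  mul_smul_assoc : ∀ {p q r : ℕ} (x : B0 p) (y : B0 q) (s : B1 r),
    smul rfl (mul rfl x y) s = smul (Nat.add_assoc p q r).symm x (smul rfl y s)
  smul_smulr_assoc : ∀ {p q r : ℕ} (x : B0 p) (s : B1 q) (y : B0 r),
    smulr rfl (smul rfl x s) y = smul (Nat.add_assoc p q r).symm x (smulr rfl s y)
  smulr_mul_assoc : ∀ {p q r : ℕ} (s : B1 p) (y : B0 q) (z : B0 r),
    smulr rfl (smulr rfl s y) z = smulr (Nat.add_assoc p q r).symm s (mul rfl y z)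
  mulee_assoc : ∀ {p q r : ℕ} (a : Bee p) (b : Bee q) (c : Bee r),
    mulee rfl (mulee rfl a b) c = mulee (Nat.add_assoc p q r).symm a (mulee rfl b c)
  -- right linearity
  mul_add : ∀ {p q r : ℕ} (h : p + q = r) (x : B0 p) (y y' : B0 q),
    mul h x (y + y') = mul h x y + mul h x y'
  smul_add : ∀ {p q r : ℕ} (h : p + q = r) (x : B0 p) (s s' : B1 q),
    smul h x (s + s') = smul h x s + smul h x s'
  smulr_add : ∀ {p q r : ℕ} (h : p + q = r) (s : B1 p) (x x' : B0 q),
    smulr h s (x + x') = smulr h s x + smulr h s x'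
  mulee_add : ∀ {p q r : ℕ} (h : p + q = r) (a : Bee p) (b b' : Bee q),
    mulee h a (b + b') = mulee h a b + mulee h a b'
  -- left distributivity with quadratic corrections
  add_mul : ∀ {p q r : ℕ} (h : p + q = r) (x₁ x₂ : B0 p) (x₃ : B0 q),
    mul h (x₁ + x₂) x₃ = mul h x₁ x₃ + mul h x₂ x₃
      + d r (P r (mulee h (crossEff (H p) x₂ x₁) (H q x₃)))
  add_smul : ∀ {p q r : ℕ} (h : p + q = r) (x₁ x₂ : B0 p) (s : B1 q),
    smul h (x₁ + x₂) s = smul h x₁ s + smul h x₂ s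
      + P r (mulee h (crossEff (H p) x₂ x₁) (H q (d q s)))
  add_smulr : ∀ {p q r : ℕ} (h : p + q = r) (s₁ s₂ : B1 p) (x : B0 q),
    smulr h (s₁ + s₂) x = smulr h s₁ x + smulr h s₂ x
      + P r (mulee h (crossEff (H p) (d p s₂) (d p s₁)) (H q x))
  add_mulee : ∀ {p q r : ℕ} (h : p + q = r) (a₁ a₂ : Bee p) (a₃ : Bee q),
    mulee h (a₁ + a₂) a₃ = mulee h a₁ a₃ + mulee h a₂ a₃
  -- compatibility of ∂ with the multiplications
  d_smul : ∀ {p q r : ℕ} (h : p + q = r) (x : B0 p) (s : B1 q),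
    d r (smul h x s) = mul h x (d q s)
  d_smulr : ∀ {p q r : ℕ} (h : p + q = r) (s : B1 p) (x : B0 q),
    d r (smulr h s x) = mul h (d p s) x
  smul_d : ∀ {p q r : ℕ} (h : p + q = r) (s : B1 p) (t : B1 q),
    smul h (d p s) t = smulr h s (d q t)
  -- compatibility with P, H, Δ and the cross effect
  P_cross_mulee : ∀ {p q r : ℕ} (h : p + q = r) (x : B0 p) (a : Bee q),
    P r (mulee h (crossEff (H p) x x) a) = smul h x (P q a)
  P_mulee_delta : ∀ {p q r : ℕ} (h : p + q = r) (a : Bee p) (x : B0 q),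
    P r (mulee h a
      (crossEff (H q) x x - H q x + (H q (d q (P q (H q x))) - H q x)))
      = smulr h (P p a) x
  H_mul : ∀ {p q r : ℕ} (h : p + q = r) (x₁ : B0 p) (x₂ : B0 q),
    H r (mul h x₁ x₂) = mulee h (crossEff (H p) x₁ x₁) (H q x₂)
      + mulee h (H p x₁)
          (crossEff (H q) x₂ x₂ - H q x₂ + (H q (d q (P q (H q x₂))) - H q x₂))
  HdP_mulee : ∀ {p q r : ℕ} (h : p + q = r) (a₁ : Bee p) (a₂ : Bee q),
    H r (d r (P r (mulee h a₁ a₂)))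
      = mulee h (H p (d p (P p a₁))) a₂ + mulee h a₁ (H q (d q (P q a₂)))
        - mulee h (H p (d p (P p a₁))) (H q (d q (P q a₂)))
  cross_mul : ∀ {p q r : ℕ} (h : p + q = r) (x₁ x₃ : B0 p) (x₂ x₄ : B0 q),
    crossEff (H r) (mul h x₁ x₂) (mul h x₃ x₄)
      = mulee h (crossEff (H p) x₁ x₃) (crossEff (H q) x₂ x₄)

variable {B0 B1 Bee : ℕ → Type*}
  [∀ n, AddGroup (B0 n)] [∀ n, AddGroup (B1 n)] [∀ n, AddCommGroup (Bee n)]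

/-- The Massey product set `⟨a,b,c⟩ ⊆ B1 (p+q+r)` of the classes of `a0`, `b0`, `c0` in a
quadratic pair algebra: all elements `−e·c̄ + ā·f` where `ā = a0 + ∂u`, `b̄ = b0 + ∂v`,
`c̄ = c0 + ∂w` range over representatives and `∂e = ā·b̄`, `∂f = b̄·c̄`. -/
def masseySet (A : QuadraticPairAlgebra B0 B1 Bee) (p q r : ℕ)
    (a0 : B0 p) (b0 : B0 q) (c0 : B0 r) : Set (B1 (p + q + r)) :=
  {z | ∃ (u : B1 p) (v : B1 q) (w : B1 r) (e : B1 (p + q)) (f : B1 (q + r)),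
    A.d (p + q) e = A.mul rfl (a0 + A.d p u) (b0 + A.d q v) ∧
    A.d (q + r) f = A.mul rfl (b0 + A.d q v) (c0 + A.d r w) ∧
    z = -(A.smulr rfl e (c0 + A.d r w)) +
        A.smul (Nat.add_assoc p q r).symm (a0 + A.d p u) f}

/-- The indeterminacy subgroup `(h₁B_{p+q})·c + a·(h₁B_{q+r}) ⊆ h₁B_{p+q+r}`. -/
def indetSet (A : QuadraticPairAlgebra B0 B1 Bee) (p q r : ℕ)
    (a0 : B0 p) (c0 : B0 r) : Set (B1 (p + q + r)) :=
  {z | ∃ (s : B1 (p + q)) (t : B1 (q + r)),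
    A.d (p + q) s = 0 ∧ A.d (q + r) t = 0 ∧
    z = A.smulr rfl s c0 + A.smul (Nat.add_assoc p q r).symm a0 t}

namespace QuadraticPairAlgebra

/-! ### Vanishing of correction terms and centrality of `Ker ∂` -/

theorem cross_zero_left (A : QuadraticPairAlgebra B0 B1 Bee) {n : ℕ} (x : B0 n) :
    crossEff (A.H n) 0 x = 0 := by
  have h := (A.sq0 n).cross_add_left 0 0 x
  rw [add_zero] at h
  exact left_eq_add.mp h

theorem zero_mulee (A : QuadraticPairAlgebra B0 B1 Bee) {p q r : ℕ} (h : p + q = r)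
    (a : Bee q) : A.mulee h (0 : Bee p) a = 0 := by
  have k := A.add_mulee h (0 : Bee p) 0 a
  rw [add_zero] at k
  exact left_eq_add.mp k

theorem smul_zero (A : QuadraticPairAlgebra B0 B1 Bee) {p q r : ℕ} (h : p + q = r)
    (x : B0 p) : A.smul h x (0 : B1 q) = 0 := by
  have k := A.smul_add h x (0 : B1 q) 0
  rw [add_zero] at k
  exact left_eq_add.mp k

theorem zero_smul (A : QuadraticPairAlgebra B0 B1 Bee) {p q r : ℕ} (h : p + q = r)
    (s : B1 q) : A.smul h (0 : B0 p) s = 0 := by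
  have k := A.add_smul h (0 : B0 p) 0 s
  rw [A.cross_zero_left, A.zero_mulee, map_zero, add_zero, add_zero] at k
  exact left_eq_add.mp k

theorem zero_smulr (A : QuadraticPairAlgebra B0 B1 Bee) {p q r : ℕ} (h : p + q = r)
    (x : B0 q) : A.smulr h (0 : B1 p) x = 0 := by
  have k := A.add_smulr h (0 : B1 p) 0 x
  rw [map_zero, A.cross_zero_left, A.zero_mulee, map_zero, add_zero, add_zero] at k
  exact left_eq_add.mp k

theorem zero_mul (A : QuadraticPairAlgebra B0 B1 Bee) {p q r : ℕ} (h : p + q = r)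
    (x : B0 q) : A.mul h (0 : B0 p) x = 0 := by
  have k := A.d_smulr h (0 : B1 p) x
  rw [A.zero_smulr, map_zero, map_zero] at k
  exact k.symm

/-- `Ker ∂` is central in `B₁`: the commutator of `x` and `y` is `P((∂x|∂y)_H)`. -/
theorem add_comm_of_d_eq_zero (A : QuadraticPairAlgebra B0 B1 Bee) {n : ℕ} {x : B1 n}
    (hx : A.d n x = 0) (y : B1 n) : x + y = y + x := by
  have h := (A.sq1 n).P_cross x y
  have h0 : crossEff (A.H n ∘ A.d n) x y = 0 := by
    have := A.cross_zero_left (A.d n y)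
    simpa [crossEff, hx] using this
  rw [h0, map_zero, sub_eq_add_neg, ← neg_add_rev, add_assoc] at h
  exact (neg_add_eq_zero.mp h.symm).symm

/-- Conjugation fixes a central element; stated in the form in which a change of
representatives alters `-e·c̄ + ā·f`. -/
theorem neg_add_shift (A : QuadraticPairAlgebra B0 B1 Bee) {n : ℕ} {x y : B1 n} (z : B1 n)
    (h : A.d n (-x + y) = 0) : -(x + z) + (y + z) = -x + y := by
  have := A.add_comm_of_d_eq_zero h z
  rw [neg_add_rev, add_assoc, ← add_assoc (-x), this, neg_add_cancel_left]

theorem add_smulr_of_right (A : QuadraticPairAlgebra B0 B1 Bee) {p q r : ℕ} (h : p + q = r)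
    (s₁ : B1 p) {s₂ : B1 p} (hs : A.d p s₂ = 0) (x : B0 q) :
    A.smulr h (s₁ + s₂) x = A.smulr h s₁ x + A.smulr h s₂ x := by
  rw [A.add_smulr, hs, A.cross_zero_left, A.zero_mulee, map_zero, add_zero]

theorem neg_smulr (A : QuadraticPairAlgebra B0 B1 Bee) {p q r : ℕ} (h : p + q = r)
    {s : B1 p} (hs : A.d p s = 0) (x : B0 q) :
    A.smulr h (-s) x = -A.smulr h s x := by
  have k := A.add_smulr_of_right h (-s) hs x
  rw [neg_add_cancel, A.zero_smulr] at k
  exact eq_neg_of_add_eq_zero_left k.symm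

theorem smul_neg (A : QuadraticPairAlgebra B0 B1 Bee) {p q r : ℕ} (h : p + q = r)
    (x : B0 p) (s : B1 q) : A.smul h x (-s) = -A.smul h x s := by
  have k := A.smul_add h x (-s) s
  rw [neg_add_cancel, A.smul_zero] at k
  exact eq_neg_of_add_eq_zero_left k.symm

/-! ### Massey elements for fixed representatives -/

/-- The set of elements `-e·c + a·f` with `∂e = a·b` and `∂f = b·c`, for fixed
representatives `a`, `b`, `c`. -/
def masseyRep (A : QuadraticPairAlgebra B0 B1 Bee) {p q r : ℕ}
    (a : B0 p) (b : B0 q) (c : B0 r) : Set (B1 (p + q + r)) :=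
  {z | ∃ (e : B1 (p + q)) (f : B1 (q + r)),
    A.d (p + q) e = A.mul rfl a b ∧ A.d (q + r) f = A.mul rfl b c ∧
    z = -(A.smulr rfl e c) + A.smul (Nat.add_assoc p q r).symm a f}

theorem d_massey (A : QuadraticPairAlgebra B0 B1 Bee) {p q r : ℕ}
    {a : B0 p} {b : B0 q} {c : B0 r} {e : B1 (p + q)} {f : B1 (q + r)}
    (he : A.d (p + q) e = A.mul rfl a b) (hf : A.d (q + r) f = A.mul rfl b c) :
    A.d (p + q + r)
      (-(A.smulr rfl e c) + A.smul (Nat.add_assoc p q r).symm a f) = 0 := by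
  rw [map_add, map_neg, A.d_smulr, A.d_smul, he, hf, A.mul_assoc, neg_add_cancel]

theorem d_correct_left (A : QuadraticPairAlgebra B0 B1 Bee) {p q : ℕ}
    (a : B0 p) (b : B0 q) (u : B1 p) {e : B1 (p + q)}
    (he : A.d (p + q) e = A.mul rfl a b) :
    A.d (p + q) (e + A.smulr rfl u b
      + A.P (p + q) (A.mulee rfl (crossEff (A.H p) (A.d p u) a) (A.H q b)))
      = A.mul rfl (a + A.d p u) b := by
  rw [map_add, map_add, he, A.d_smulr, A.add_mul]

theorem d_correct_right (A : QuadraticPairAlgebra B0 B1 Bee) {p q : ℕ}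
    (a : B0 p) (b : B0 q) (v : B1 q) {e : B1 (p + q)}
    (he : A.d (p + q) e = A.mul rfl a b) :
    A.d (p + q) (e + A.smul rfl a v) = A.mul rfl a (b + A.d q v) := by
  rw [map_add, he, A.d_smul, A.mul_add]

/-- `(s + P α)·x = s·x + P(α·Δ(x))`: cross effects with `∂P α` vanish. -/
theorem add_P_smulr (A : QuadraticPairAlgebra B0 B1 Bee) {p q r : ℕ} (h : p + q = r)
    (s : B1 p) (α : Bee p) (x : B0 q) :
    A.smulr h (s + A.P p α) x = A.smulr h s x + A.P r (A.mulee h α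
      (crossEff (A.H q) x x - A.H q x + (A.H q (A.d q (A.P q (A.H q x))) - A.H q x))) := by
  have h0 : crossEff (A.H p) (A.d p (A.P p α)) (A.d p s) = 0 :=
    (A.sq0 p).cross_P_left α (A.d p s)
  rw [A.add_smulr, h0, A.zero_mulee, map_zero, add_zero, A.P_mulee_delta]

/-- The quadratic corrections agree by the formula for `H(b·c)` and the multiplicativity of
cross effects. -/
theorem masseyRep_shift_left (A : QuadraticPairAlgebra B0 B1 Bee) {p q r : ℕ}
    {a : B0 p} {b : B0 q} {c : B0 r} {z : B1 (p + q + r)} (u : B1 p)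
    (hz : z ∈ A.masseyRep a b c) : z ∈ A.masseyRep (a + A.d p u) b c := by
  obtain ⟨e, f, he, hf, rfl⟩ := hz
  refine ⟨_, f, A.d_correct_left a b u he, hf, ?_⟩
  have h1 : A.smulr rfl (e + A.smulr rfl u b
      + A.P (p + q) (A.mulee rfl (crossEff (A.H p) (A.d p u) a) (A.H q b))) c
      = A.smulr rfl e c + (A.smulr (Nat.add_assoc p q r).symm u (A.mul rfl b c)
        + A.P (p + q + r) (A.mulee (Nat.add_assoc p q r).symm
            (crossEff (A.H p) (A.d p u) a) (A.H (q + r) (A.mul rfl b c)))) := by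
    rw [A.add_P_smulr, A.add_smulr, A.d_smulr, he, A.cross_mul, A.H_mul,
      A.mulee_add (Nat.add_assoc p q r).symm, map_add (A.P (p + q + r)), ← A.mulee_assoc,
      ← A.mulee_assoc, A.smulr_mul_assoc, ← add_assoc (A.smulr _ e c),
      ← add_assoc (A.smulr _ e c + _)]
  have h2 : A.smul (Nat.add_assoc p q r).symm (a + A.d p u) f
      = A.smul (Nat.add_assoc p q r).symm a f
        + (A.smulr (Nat.add_assoc p q r).symm u (A.mul rfl b c)
        + A.P (p + q + r) (A.mulee (Nat.add_assoc p q r).symm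
            (crossEff (A.H p) (A.d p u) a) (A.H (q + r) (A.mul rfl b c)))) := by
    rw [A.add_smul, A.smul_d, hf]
    exact add_assoc _ _ _
  rw [h1, h2, A.neg_add_shift _ (A.d_massey he hf)]

theorem masseyRep_shift_mid (A : QuadraticPairAlgebra B0 B1 Bee) {p q r : ℕ}
    {a : B0 p} {b : B0 q} {c : B0 r} {z : B1 (p + q + r)} (v : B1 q)
    (hz : z ∈ A.masseyRep a b c) : z ∈ A.masseyRep a (b + A.d q v) c := by
  obtain ⟨e, f, he, hf, rfl⟩ := hz
  refine ⟨_, _, A.d_correct_right a b v he, A.d_correct_left b c v hf, ?_⟩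
  have h1 : A.smulr rfl (e + A.smul rfl a v) c
      = A.smulr rfl e c + (A.smul (Nat.add_assoc p q r).symm a (A.smulr rfl v c)
        + A.smul (Nat.add_assoc p q r).symm a (A.P (q + r) (A.mulee rfl
            (crossEff (A.H q) (A.d q v) b) (A.H r c)))) := by
    rw [A.add_smulr, A.d_smul, he, A.cross_mul, A.mulee_assoc, A.P_cross_mulee,
      A.smul_smulr_assoc]
    exact add_assoc _ _ _
  rw [h1, A.smul_add, A.smul_add, add_assoc (A.smul _ a f), A.neg_add_shift _ (A.d_massey he hf)]

theorem masseyRep_shift_right (A : QuadraticPairAlgebra B0 B1 Bee) {p q r : ℕ}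
    {a : B0 p} {b : B0 q} {c : B0 r} {z : B1 (p + q + r)} (w : B1 r)
    (hz : z ∈ A.masseyRep a b c) : z ∈ A.masseyRep a b (c + A.d r w) := by
  obtain ⟨e, f, he, hf, rfl⟩ := hz
  refine ⟨e, _, he, A.d_correct_right b c w hf, ?_⟩
  rw [A.smulr_add, ← A.smul_d, he, A.mul_smul_assoc, A.smul_add,
    A.neg_add_shift _ (A.d_massey he hf)]

/-- The Massey product set is already exhausted by the given representatives. -/
theorem masseySet_eq_masseyRep (A : QuadraticPairAlgebra B0 B1 Bee) (p q r : ℕ)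
    (a : B0 p) (b : B0 q) (c : B0 r) :
    masseySet A p q r a b c = A.masseyRep a b c := by
  ext z
  constructor
  · rintro ⟨u, v, w, e, f, he, hf, hz⟩
    have h : z ∈ A.masseyRep (a + A.d p u) (b + A.d q v) (c + A.d r w) :=
      ⟨e, f, he, hf, hz⟩
    have k := A.masseyRep_shift_left (-u)
      (A.masseyRep_shift_mid (-v) (A.masseyRep_shift_right (-w) h))
    simpa only [map_neg, add_neg_cancel_right] using k
  · rintro ⟨e, f, he, hf, hz⟩
    refine ⟨0, 0, 0, e, f, ?_, ?_, ?_⟩ <;> simpa only [map_zero, add_zero]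

theorem indet_central (A : QuadraticPairAlgebra B0 B1 Bee) {p q r : ℕ} (h : p + q = r)
    {s : B1 p} (hs : A.d p s = 0) (c : B0 q) (y : B1 r) :
    A.smulr h s c + y = y + A.smulr h s c :=
  A.add_comm_of_d_eq_zero (by rw [A.d_smulr, hs, A.zero_mul]) y

theorem indet_swap (A : QuadraticPairAlgebra B0 B1 Bee) {p q r : ℕ} (h : p + q = r)
    {s : B1 p} (hs : A.d p s = 0) (c : B0 q) (x y z : B1 r) :
    (x + A.smulr h s c) + (y + z) = (x + y) + (A.smulr h s c + z) := by
  rw [add_assoc x, ← add_assoc (A.smulr h s c), A.indet_central h hs, add_assoc y,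
    ← add_assoc x]

/-- The indeterminacy `(h₁B)·c + a·(h₁B)` as a subgroup. -/
def indetSubgroup (A : QuadraticPairAlgebra B0 B1 Bee) (p q r : ℕ)
    (a : B0 p) (c : B0 r) : AddSubgroup (B1 (p + q + r)) where
  carrier := indetSet A p q r a c
  zero_mem' := ⟨0, 0, map_zero _, map_zero _, by
    rw [A.zero_smulr, A.smul_zero, add_zero]⟩
  add_mem' := by
    rintro _ _ ⟨s, t, hs, ht, rfl⟩ ⟨s', t', hs', ht', rfl⟩
    refine ⟨s + s', t + t', by rw [map_add, hs, hs', add_zero],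
      by rw [map_add, ht, ht', add_zero], ?_⟩
    rw [A.add_smulr_of_right _ _ hs', A.smul_add]
    exact (A.indet_swap _ hs' c _ _ _).symm
  neg_mem' := by
    rintro _ ⟨s, t, hs, ht, rfl⟩
    refine ⟨-s, -t, by rw [map_neg, hs, neg_zero], by rw [map_neg, ht, neg_zero], ?_⟩
    rw [A.neg_smulr _ hs, A.smul_neg, A.indet_central _ hs, neg_add_rev]

/-- Changing `e` by `s ∈ Ker ∂` and `f` by `t` changes the Massey element by `-s·c + a·t`. -/
theorem massey_add (A : QuadraticPairAlgebra B0 B1 Bee) {p q r : ℕ}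
    (a : B0 p) (c : B0 r) (e s : B1 (p + q)) (f t : B1 (q + r))
    (hs : A.d (p + q) s = 0) :
    -(A.smulr rfl (e + s) c) + A.smul (Nat.add_assoc p q r).symm a (f + t)
      = (-(A.smulr rfl e c) + A.smul (Nat.add_assoc p q r).symm a f)
        + (A.smulr rfl (-s) c + A.smul (Nat.add_assoc p q r).symm a t) := by
  have hs' : A.d (p + q) (-s) = 0 := by rw [map_neg, hs, neg_zero]
  rw [A.add_smulr_of_right _ _ hs, neg_add_rev, A.smul_add, ← A.neg_smulr _ hs,
    A.indet_central _ hs']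
  exact A.indet_swap _ hs' c _ _ _

end QuadraticPairAlgebra

/-- STATEMENT 17: For a quadratic pair algebra `B` and homogeneous classes `a`, `b`, `c`
of degrees `p`, `q`, `r` (represented by `a0`, `b0`, `c0`) with `a·b = 0` and `b·c = 0`:
defining elements `e`, `f` exist for arbitrary representatives; every resulting element
`−e·c̄ + ā·f` lies in `h₁B_{p+q+r} = Ker ∂`; and the Massey product set is a coset of the
subgroup `(h₁B_{p+q})·c + a·(h₁B_{q+r})` of `h₁B_{p+q+r}`. -/
theorem quadraticPairAlgebra_massey_coset (A : QuadraticPairAlgebra B0 B1 Bee)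
    (p q r : ℕ) (a0 : B0 p) (b0 : B0 q) (c0 : B0 r)
    (hab : ∃ e : B1 (p + q), A.d (p + q) e = A.mul rfl a0 b0)
    (hbc : ∃ f : B1 (q + r), A.d (q + r) f = A.mul rfl b0 c0) :
    (∀ (u : B1 p) (v : B1 q) (w : B1 r),
      ∃ (e : B1 (p + q)) (f : B1 (q + r)),
        A.d (p + q) e = A.mul rfl (a0 + A.d p u) (b0 + A.d q v) ∧
        A.d (q + r) f = A.mul rfl (b0 + A.d q v) (c0 + A.d r w)) ∧
    (∀ z ∈ masseySet A p q r a0 b0 c0, A.d (p + q + r) z = 0) ∧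
    (∃ S : AddSubgroup (B1 (p + q + r)),
      (S : Set (B1 (p + q + r))) = indetSet A p q r a0 c0) ∧
    (∃ g ∈ masseySet A p q r a0 b0 c0,
      masseySet A p q r a0 b0 c0 =
        {z | ∃ s ∈ indetSet A p q r a0 c0, z = g + s}) := by
  obtain ⟨e₀, he₀⟩ := hab
  obtain ⟨f₀, hf₀⟩ := hbc
  refine ⟨fun u v w => ?_, fun z hz => ?_, ⟨A.indetSubgroup p q r a0 c0, rfl⟩, ?_⟩
  · exact ⟨_, _, A.d_correct_right _ b0 v (A.d_correct_left a0 b0 u he₀),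
      A.d_correct_right _ c0 w (A.d_correct_left b0 c0 v hf₀)⟩
  · obtain ⟨u, v, w, e, f, he, hf, rfl⟩ := hz
    exact A.d_massey he hf
  · rw [A.masseySet_eq_masseyRep]
    refine ⟨_, ⟨e₀, f₀, he₀, hf₀, rfl⟩, Set.ext fun z => ⟨?_, ?_⟩⟩
    · rintro ⟨e, f, he, hf, rfl⟩
      have hs : A.d (p + q) (-e₀ + e) = 0 := by
        rw [map_add, map_neg, he, he₀, neg_add_cancel]
      have ht : A.d (q + r) (-f₀ + f) = 0 := by
        rw [map_add, map_neg, hf, hf₀, neg_add_cancel]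
      refine ⟨_, ⟨-(-e₀ + e), -f₀ + f, by rw [map_neg, hs, neg_zero], ht, rfl⟩, ?_⟩
      rw [← A.massey_add a0 c0 e₀ _ f₀ _ hs, add_neg_cancel_left, add_neg_cancel_left]
    · rintro ⟨_, ⟨s, t, hs, ht, rfl⟩, rfl⟩
      refine ⟨e₀ + -s, f₀ + t, by rw [map_add, map_neg, hs, neg_zero, add_zero, he₀],
        by rw [map_add, ht, add_zero, hf₀], ?_⟩
      rw [A.massey_add a0 c0 e₀ _ f₀ _ (by rw [map_neg, hs, neg_zero]), neg_neg]
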